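/- Let a_n = 2^{−nⁿ·n³} and F = (⋃_{n∈ℕ} [a_{2n}/2, a_{2n}]×{0}) ∪ (⋃_{n∈ℕ} {0}×[a_{2n−1}/2, a_{2n−1}]) ⊂ ℝ². Then sup{κ(x,y,z) : x, y, z ∈ F pairwise distinct} = ∞ (the thickness of F vanishes), and U_p^1(F) = ∞ for every p ∈ [1,∞). -/

import Mathlib

open MeasureTheory Metric Set Filter
open scoped ENNReal Topology Classical

noncomputable section

/-- The affine line through `x` and `y`. -/
def lineThrough {n : ℕ} (x y : EuclideanSpace ℝ (Fin n)) : Set (EuclideanSpace ℝ (Fin n)) :=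
  {p | ∃ t : ℝ, p = x + t • (y - x)}

/-- The inverse circumradius `κ(x,y,z)` of a triple of points, set to `0` when the
points are not pairwise distinct. -/
def kappa {n : ℕ} (x y z : EuclideanSpace ℝ (Fin n)) : ℝ≥0∞ :=
  if x ≠ y ∧ y ≠ z ∧ x ≠ z then
    ENNReal.ofReal (2 * Metric.infDist z (lineThrough x y) / (‖x - z‖ * ‖y - z‖))
  else 0

/-- `κ_G(x) = sup_{v,w ∈ X} κ(x,v,w)`. -/
def kappaG {n : ℕ} (X : Set (EuclideanSpace ℝ (Fin n))) (x : EuclideanSpace ℝ (Fin n)) : ℝ≥0∞ :=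
  ⨆ v ∈ X, ⨆ w ∈ X, kappa x v w

/-- `κ_i(x,y) = sup_{z ∈ X} κ(x,y,z)`. -/
def kappaI {n : ℕ} (X : Set (EuclideanSpace ℝ (Fin n))) (x y : EuclideanSpace ℝ (Fin n)) : ℝ≥0∞ :=
  ⨆ z ∈ X, kappa x y z

/-- The energy `U_p^α(X) = ∫_X κ_G(x)^p dH^α(x)`. -/
def energyU {n : ℕ} (p α : ℝ) (X : Set (EuclideanSpace ℝ (Fin n))) : ℝ≥0∞ :=
  ∫⁻ x in X, kappaG X x ^ p ∂ μH[α]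

/-- The energy `I_p^α(X) = ∫_X ∫_X κ_i(x,y)^p dH^α(x) dH^α(y)`. -/
def energyI {n : ℕ} (p α : ℝ) (X : Set (EuclideanSpace ℝ (Fin n))) : ℝ≥0∞ :=
  ∫⁻ y in X, ∫⁻ x in X, kappaI X x y ^ p ∂ μH[α] ∂ μH[α]

/-- The integral Menger curvature `M_p^α(X)`. -/
def energyM {n : ℕ} (p α : ℝ) (X : Set (EuclideanSpace ℝ (Fin n))) : ℝ≥0∞ :=
  ∫⁻ z in X, ∫⁻ y in X, ∫⁻ x in X, kappa x y z ^ p ∂ μH[α] ∂ μH[α] ∂ μH[α]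

/-- The open double cone about `x` in direction `s` with opening angle `ε`. -/
def cone {n : ℕ} (s : EuclideanSpace ℝ (Fin n)) (ε : ℝ) (x : EuclideanSpace ℝ (Fin n)) :
    Set (EuclideanSpace ℝ (Fin n)) :=
  {y | y ≠ x ∧
    min (InnerProductGeometry.angle (y - x) s) (InnerProductGeometry.angle (y - x) (-s)) < ε}

/-- `X` has an approximate `α`-tangent at `x`. -/
def HasApproxTangent {n : ℕ} (α : ℝ) (X : Set (EuclideanSpace ℝ (Fin n)))
    (x : EuclideanSpace ℝ (Fin n)) : Prop :=
  ∃ s : EuclideanSpace ℝ (Fin n), ‖s‖ = 1 ∧ ∀ ε > (0:ℝ),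
    Filter.Tendsto
      (fun r : ℝ => μH[α] ((X \ cone s ε x) ∩ Metric.closedBall x r) / ENNReal.ofReal (2 * r) ^ α)
      (𝓝[>] 0) (𝓝 0)

/-- `X` has a weak approximate `α`-tangent at `x`. -/
def HasWeakApproxTangent {n : ℕ} (α : ℝ) (X : Set (EuclideanSpace ℝ (Fin n)))
    (x : EuclideanSpace ℝ (Fin n)) : Prop :=
  ∃ ρ > (0:ℝ), ∃ s : ℝ → EuclideanSpace ℝ (Fin n), (∀ r ∈ Set.Ioo (0:ℝ) ρ, ‖s r‖ = 1) ∧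
    ∀ ε > (0:ℝ),
      Filter.Tendsto
        (fun r : ℝ =>
          μH[α] ((X \ cone (s r) ε x) ∩ Metric.closedBall x r) / ENNReal.ofReal (2 * r) ^ α)
        (𝓝[>] 0) (𝓝 0)

/-- Lower `α`-density of `X` at `x`. -/
def lowerDensity {n : ℕ} (α : ℝ) (X : Set (EuclideanSpace ℝ (Fin n)))
    (x : EuclideanSpace ℝ (Fin n)) : ℝ≥0∞ :=
  Filter.liminf
    (fun r : ℝ => μH[α] (X ∩ Metric.closedBall x r) / ENNReal.ofReal (2 * r) ^ α) (𝓝[>] 0)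

/-- Upper `α`-density of `X` at `x`. -/
def upperDensity {n : ℕ} (α : ℝ) (X : Set (EuclideanSpace ℝ (Fin n)))
    (x : EuclideanSpace ℝ (Fin n)) : ℝ≥0∞ :=
  Filter.limsup
    (fun r : ℝ => μH[α] (X ∩ Metric.closedBall x r) / ENNReal.ofReal (2 * r) ^ α) (𝓝[>] 0)


/-- `a_n = 2 ^ (-(n^n * n^3))`. -/
def aseq (n : ℕ) : ℝ := ((2 : ℝ) ^ (n ^ n * n ^ 3))⁻¹

/-- The set `F = (⋃_{n ≥ 1} [a_{2n}/2, a_{2n}] × {0}) ∪ (⋃_{n ≥ 1} {0} × [a_{2n-1}/2, a_{2n-1}])`. -/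
def Fset : Set (EuclideanSpace ℝ (Fin 2)) :=
  {p | ∃ n : ℕ, 1 ≤ n ∧ p 1 = 0 ∧ p 0 ∈ Set.Icc (aseq (2 * n) / 2) (aseq (2 * n))} ∪
  {p | ∃ n : ℕ, 1 ≤ n ∧ p 0 = 0 ∧ p 1 ∈ Set.Icc (aseq (2 * n - 1) / 2) (aseq (2 * n - 1))}

/-!
If `x` and `y` lie on one coordinate axis, `z` on another, and `‖y‖ ≤ ‖z‖ ≤ ‖x‖`, then `z` has
distance `‖z‖` from the line through `x` and `y`, while `‖x - z‖ ≤ 2‖x‖` and `‖y - z‖ ≤ 2‖z‖`, so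
that `κ(x,y,z) ≥ 1 / (2‖x‖)`. When segments `[a_n / 2, a_n]` with `a_{n+1} ≤ a_n / 2` are placed
alternately on the two axes, every `x` on a segment of the first axis has such partners on the next
two segments. Letting `x` tend to the origin gives infinite curvature, and since a segment at scale
`a` has length `a / 2`, its contribution to `U_p^1` is at least
`(2a)^(-p) · a / 2 = (2a)^(1-p) / 4`. For `p ≥ 1` this is bounded below as `a → 0`, so the sum over
the infinitely many segments diverges.
-/

open scoped Function

section Curvature

variable {d : ℕ} {x y z : EuclideanSpace ℝ (Fin d)} {i : Fin d}

lemma abs_sub_apply_le_infDist_lineThrough (hxy : x i = y i) :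
    |z i - x i| ≤ infDist z (lineThrough x y) := by
  have line_nonempty : (lineThrough x y).Nonempty := ⟨x, 0, by simp⟩
  rw [le_infDist line_nonempty]
  rintro _ ⟨t, rfl⟩
  rw [dist_eq_norm]
  simpa [hxy] using PiLp.norm_apply_le (z - (x + t • (y - x))) i

lemma ofReal_inv_two_mul_norm_le_kappa (hxy : x ≠ y) (hx : x i = 0) (hy : y i = 0) (hz : z ≠ 0)
    (hz_axis : |z i| = ‖z‖) (hyz : ‖y‖ ≤ ‖z‖) (hzx : ‖z‖ ≤ ‖x‖) :
    ENNReal.ofReal (2 * ‖x‖)⁻¹ ≤ kappa x y z := by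
  have hz_pos : 0 < ‖z‖ := norm_pos_iff.2 hz
  have hx_pos : 0 < ‖x‖ := hz_pos.trans_le hzx
  have ne_of_apply_eq_zero {v : EuclideanSpace ℝ (Fin d)} (hv : v i = 0) : v ≠ z := by
    rintro rfl
    simp [← hz_axis, hv] at hz_pos
  have hyz_ne := ne_of_apply_eq_zero hy
  have hxz_ne := ne_of_apply_eq_zero hx
  have norm_le_infDist : ‖z‖ ≤ infDist z (lineThrough x y) := by
    simpa [hx, hz_axis] using abs_sub_apply_le_infDist_lineThrough (z := z) (hx.trans hy.symm)
  have norm_x_sub_z : ‖x - z‖ ≤ 2 * ‖x‖ := by linarith [norm_sub_le x z]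
  have norm_y_sub_z : ‖y - z‖ ≤ 2 * ‖z‖ := by linarith [norm_sub_le y z]
  have hdist : 0 ≤ infDist z (lineThrough x y) := infDist_nonneg
  have hxz_pos : 0 < ‖x - z‖ := norm_pos_iff.2 (sub_ne_zero.2 hxz_ne)
  have hyz_pos : 0 < ‖y - z‖ := norm_pos_iff.2 (sub_ne_zero.2 hyz_ne)
  rw [kappa, if_pos ⟨hxy, hyz_ne, hxz_ne⟩]
  refine ENNReal.ofReal_le_ofReal ?_
  calc (2 * ‖x‖)⁻¹ = 2 * ‖z‖ / (2 * ‖x‖ * (2 * ‖z‖)) := by field_simp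
    _ ≤ 2 * infDist z (lineThrough x y) / (‖x - z‖ * ‖y - z‖) := by gcongr

lemma kappa_le_kappaG {X : Set (EuclideanSpace ℝ (Fin d))} (hy : y ∈ X) (hz : z ∈ X) :
    kappa x y z ≤ kappaG X x :=
  le_iSup₂_of_le y hy (le_iSup₂_of_le z hz le_rfl)

end Curvature

section AxisSegments

variable {ι : Type*} [DecidableEq ι] (i : ι)

lemma isometry_single [Fintype ι] :
    Isometry (EuclideanSpace.single i : ℝ → EuclideanSpace ℝ ι) :=
  Isometry.of_dist_eq fun s t ↦ PiLp.dist_single_same 2 (fun _ ↦ ℝ) i s t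

lemma measurableSet_single_image [Finite ι] {s : Set ℝ} (hs : MeasurableSet s) :
    MeasurableSet (EuclideanSpace.single i '' s : Set (EuclideanSpace ℝ ι)) := by
  cases nonempty_fintype ι
  exact (isometry_single i).isClosedEmbedding.measurableEmbedding.measurableSet_image.2 hs

lemma hausdorffMeasure_one_single_image [Fintype ι] (s : Set ℝ) :
    μH[1] (EuclideanSpace.single i '' s : Set (EuclideanSpace ℝ ι)) = volume s := by
  rw [(isometry_single i).hausdorffMeasure_image (Or.inl zero_le_one), hausdorffMeasure_real]

end AxisSegments

lemma setLIntegral_eq_top_of_pairwise_disjoint {α ι : Type*} [MeasurableSpace α] [Countable ι]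
    [Infinite ι] {μ : Measure α} {f : α → ℝ≥0∞} {X : Set α} {A : ι → Set α} {ε : ℝ≥0∞}
    (hAX : ∀ k, A k ⊆ X) (hA : ∀ k, MeasurableSet (A k)) (hdisj : Pairwise (Disjoint on A))
    (hε : ε ≠ 0) (hf : ∀ k, ε ≤ ∫⁻ x in A k, f x ∂μ) :
    ∫⁻ x in X, f x ∂μ = ⊤ := by
  rw [eq_top_iff]
  calc ⊤ = ∑' _ : ι, ε := (ENNReal.tsum_const_eq_top_of_ne_zero hε).symm
    _ ≤ ∑' k, ∫⁻ x in A k, f x ∂μ := ENNReal.tsum_le_tsum hf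
    _ = ∫⁻ x in ⋃ k, A k, f x ∂μ := (lintegral_iUnion hA hdisj f).symm
    _ ≤ ∫⁻ x in X, f x ∂μ := lintegral_mono_set (iUnion_subset hAX)

section Halving

variable {a : ℕ → ℝ}

lemma antitone_of_succ_le_half (hpos : ∀ n, 0 < a n) (hhalf : ∀ n, a (n + 1) ≤ a n / 2) :
    Antitone a :=
  antitone_nat_of_succ_le fun n ↦ (hhalf n).trans (half_le_self (hpos n).le)

lemma tendsto_zero_of_succ_le_half (hpos : ∀ n, 0 < a n) (hhalf : ∀ n, a (n + 1) ≤ a n / 2) :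
    Tendsto a atTop (𝓝 0) := by
  have le_geometric (n : ℕ) : a n ≤ (1 / 2) ^ n * a 0 :=
    le_geom (by norm_num) n fun k _ ↦ (hhalf k).trans_eq (by ring)
  have geometric_tendsto : Tendsto (fun n ↦ (1 / 2 : ℝ) ^ n * a 0) atTop (𝓝 0) := by
    simpa using (tendsto_pow_atTop_nhds_zero_of_lt_one (r := (1 / 2 : ℝ))
      (by norm_num) (by norm_num)).mul_const (a 0)
  exact squeeze_zero (fun n ↦ (hpos n).le) le_geometric geometric_tendsto

lemma pairwise_disjoint_Ioc_half_even (hpos : ∀ n, 0 < a n) (hhalf : ∀ n, a (n + 1) ≤ a n / 2) :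
    Pairwise (Disjoint on fun n ↦ Ioc (a (2 * n) / 2) (a (2 * n))) := by
  have ha := antitone_of_succ_le_half hpos hhalf
  have even_antitone : Antitone fun n ↦ a (2 * n) := fun m n hmn ↦ ha (by lia)
  refine even_antitone.pairwise_disjoint_on_Ioc_succ.mono fun m n h ↦
    h.mono (Ioc_subset_Ioc_left ?_) (Ioc_subset_Ioc_left ?_)
  all_goals exact (ha (Nat.le_succ _)).trans (hhalf _)

end Halving

/-- The segments `[a n / 2, a n]` placed alternately on two coordinate axes: on axis `i` for even
`n` and on axis `j` for odd `n`. For `i = 0`, `j = 1` and `a n = aseq (n + 2)` this is `Fset`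
without its largest segment, the one with index `1`. -/
def alternatingSegments {d : ℕ} (i j : Fin d) (a : ℕ → ℝ) : Set (EuclideanSpace ℝ (Fin d)) :=
  (⋃ n, EuclideanSpace.single i '' Icc (a (2 * n) / 2) (a (2 * n))) ∪
    ⋃ n, EuclideanSpace.single j '' Icc (a (2 * n + 1) / 2) (a (2 * n + 1))

section AlternatingSegments

variable {d : ℕ} {i j : Fin d} {a : ℕ → ℝ} {X : Set (EuclideanSpace ℝ (Fin d))}

lemma single_mem_alternatingSegments_even {n : ℕ} {s : ℝ}
    (hs : s ∈ Icc (a (2 * n) / 2) (a (2 * n))) :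
    EuclideanSpace.single i s ∈ alternatingSegments i j a :=
  Or.inl (mem_iUnion.2 ⟨n, mem_image_of_mem _ hs⟩)

lemma single_mem_alternatingSegments_odd {n : ℕ} {s : ℝ}
    (hs : s ∈ Icc (a (2 * n + 1) / 2) (a (2 * n + 1))) :
    EuclideanSpace.single j s ∈ alternatingSegments i j a :=
  Or.inr (mem_iUnion.2 ⟨n, mem_image_of_mem _ hs⟩)

lemma ofReal_inv_two_mul_le_kappaG_single (hij : i ≠ j) (hpos : ∀ n, 0 < a n)
    (hhalf : ∀ n, a (n + 1) ≤ a n / 2) (hX : alternatingSegments i j a ⊆ X) {n : ℕ} {s : ℝ}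
    (hs : s ∈ Ioc (a (2 * n) / 2) (a (2 * n))) :
    ENNReal.ofReal (2 * a (2 * n))⁻¹ ≤ kappaG X (EuclideanSpace.single i s) := by
  have endpoint_mem (k : ℕ) : a k ∈ Icc (a k / 2) (a k) := ⟨half_le_self (hpos k).le, le_rfl⟩
  have ht : a (2 * (n + 1)) ≤ a (2 * n + 1) :=
    antitone_of_succ_le_half hpos hhalf (Nat.le_succ _)
  have hb : a (2 * n + 1) < s := (hhalf _).trans_lt hs.1
  have ht_pos := hpos (2 * (n + 1))
  have hb_pos := hpos (2 * n + 1)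
  have hs_pos : 0 < s := hb_pos.trans hb
  calc ENNReal.ofReal (2 * a (2 * n))⁻¹
      ≤ ENNReal.ofReal (2 * ‖(EuclideanSpace.single i s : EuclideanSpace ℝ (Fin d))‖)⁻¹ := by
        refine ENNReal.ofReal_le_ofReal ?_
        rw [PiLp.norm_single, Real.norm_of_nonneg hs_pos.le]
        gcongr
        exact hs.2
    _ ≤ kappa (EuclideanSpace.single i s) (EuclideanSpace.single i (a (2 * (n + 1))))
          (EuclideanSpace.single j (a (2 * n + 1))) := by
        refine ofReal_inv_two_mul_norm_le_kappa (i := j)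
          ((isometry_single i).injective.ne (ht.trans_lt hb).ne') ?_ ?_ ?_ ?_ ?_ ?_
        all_goals simp [hij.symm, abs_of_pos, ht_pos, hb_pos, hs_pos, hb_pos.ne', ht, hb.le]
    _ ≤ kappaG X (EuclideanSpace.single i s) :=
        kappa_le_kappaG (hX (single_mem_alternatingSegments_even (endpoint_mem _)))
          (hX (single_mem_alternatingSegments_odd (endpoint_mem _)))

lemma iSup_kappaG_eq_top_of_alternatingSegments_subset (hij : i ≠ j) (hpos : ∀ n, 0 < a n)
    (hhalf : ∀ n, a (n + 1) ≤ a n / 2) (hX : alternatingSegments i j a ⊆ X) :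
    ⨆ x ∈ X, kappaG X x = ⊤ := by
  have scale_tendsto : Tendsto (fun n ↦ 2 * a (2 * n)) atTop (𝓝 0) := by
    simpa using ((tendsto_zero_of_succ_le_half hpos hhalf).comp
      (tendsto_id.const_mul_atTop' two_pos)).const_mul 2
  have bound_tendsto : Tendsto (fun n ↦ ENNReal.ofReal (2 * a (2 * n))⁻¹) atTop (𝓝 ⊤) :=
    ENNReal.tendsto_ofReal_atTop.comp <| tendsto_inv_nhdsGT_zero.comp <|
      tendsto_nhdsWithin_iff.2 ⟨scale_tendsto, .of_forall fun n ↦ mul_pos two_pos (hpos _)⟩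
  refine top_le_iff.1 (le_of_tendsto' bound_tendsto fun n ↦ ?_)
  have endpoint_mem : a (2 * n) ∈ Ioc (a (2 * n) / 2) (a (2 * n)) :=
    ⟨half_lt_self (hpos _), le_rfl⟩
  exact (ofReal_inv_two_mul_le_kappaG_single hij hpos hhalf hX endpoint_mem).trans <|
    le_iSup₂_of_le _ (hX (single_mem_alternatingSegments_even (Ioc_subset_Icc_self endpoint_mem)))
      le_rfl

lemma ofReal_rpow_le_setLIntegral_kappaG_rpow (hij : i ≠ j) (hpos : ∀ n, 0 < a n)
    (hhalf : ∀ n, a (n + 1) ≤ a n / 2) (hX : alternatingSegments i j a ⊆ X) {p : ℝ} (hp : 0 ≤ p)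
    (n : ℕ) :
    ENNReal.ofReal ((2 * a (2 * n)) ^ (1 - p) / 4) ≤
      ∫⁻ x in EuclideanSpace.single i '' Ioc (a (2 * n) / 2) (a (2 * n)),
        kappaG X x ^ p ∂μH[1] := by
  have hscale : 0 < 2 * a (2 * n) := mul_pos two_pos (hpos _)
  calc ENNReal.ofReal ((2 * a (2 * n)) ^ (1 - p) / 4)
      = ENNReal.ofReal (2 * a (2 * n))⁻¹ ^ p *
          μH[1] (EuclideanSpace.single i '' Ioc (a (2 * n) / 2) (a (2 * n)) :
            Set (EuclideanSpace ℝ (Fin d))) := by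
        rw [hausdorffMeasure_one_single_image, Real.volume_Ioc,
          ENNReal.ofReal_rpow_of_nonneg (by positivity) hp, ← ENNReal.ofReal_mul (by positivity),
          Real.rpow_sub hscale, Real.rpow_one, Real.inv_rpow hscale.le]
        ring_nf
    _ = ∫⁻ _ in EuclideanSpace.single i '' Ioc (a (2 * n) / 2) (a (2 * n)),
          ENNReal.ofReal (2 * a (2 * n))⁻¹ ^ p ∂μH[1] := (setLIntegral_const _ _).symm
    _ ≤ _ := by
        refine setLIntegral_mono' (measurableSet_single_image i measurableSet_Ioc) ?_
        rintro _ ⟨s, hs, rfl⟩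
        exact ENNReal.rpow_le_rpow (ofReal_inv_two_mul_le_kappaG_single hij hpos hhalf hX hs) hp

lemma energyU_one_eq_top_of_alternatingSegments_subset (hij : i ≠ j) (hpos : ∀ n, 0 < a n)
    (hhalf : ∀ n, a (n + 1) ≤ a n / 2) (hX : alternatingSegments i j a ⊆ X) {p : ℝ}
    (hp : 1 ≤ p) : energyU p 1 X = ⊤ := by
  have hscale (n : ℕ) : 0 < 2 * a n := mul_pos two_pos (hpos n)
  have scale_rpow_le (n : ℕ) : (2 * a 0) ^ (1 - p) ≤ (2 * a (2 * n)) ^ (1 - p) :=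
    Real.rpow_le_rpow_of_nonpos (hscale _)
      (by gcongr; exact antitone_of_succ_le_half hpos hhalf (Nat.zero_le _)) (by linarith)
  refine setLIntegral_eq_top_of_pairwise_disjoint
    (A := fun n ↦ EuclideanSpace.single i '' Ioc (a (2 * n) / 2) (a (2 * n)))
    (ε := ENNReal.ofReal ((2 * a 0) ^ (1 - p) / 4)) ?subset ?measurable ?disjoint ?pos ?bound
  case subset =>
    rintro n _ ⟨s, hs, rfl⟩
    exact hX (single_mem_alternatingSegments_even (Ioc_subset_Icc_self hs))
  case measurable => exact fun n ↦ measurableSet_single_image i measurableSet_Ioc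
  case disjoint =>
    exact (pairwise_disjoint_Ioc_half_even hpos hhalf).mono fun m n h ↦
      (disjoint_image_iff (isometry_single i).injective).2 h
  case pos =>
    have := Real.rpow_pos_of_pos (hscale 0) (1 - p)
    exact (ENNReal.ofReal_pos.2 (by positivity)).ne'
  case bound =>
    exact fun n ↦ (ENNReal.ofReal_le_ofReal (by gcongr ?_ / 4; exact scale_rpow_le n)).trans
      (ofReal_rpow_le_setLIntegral_kappaG_rpow hij hpos hhalf hX (zero_le_one.trans hp) n)

end AlternatingSegments

theorem Fset_zero_thickness_and_energyU_infinite_general {d : ℕ} {i j : Fin d} (hij : i ≠ j)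
    {a : ℕ → ℝ} (hpos : ∀ n, 0 < a n) (hhalf : ∀ n, a (n + 1) ≤ a n / 2)
    {X : Set (EuclideanSpace ℝ (Fin d))} (hX : alternatingSegments i j a ⊆ X) :
    (⨆ x ∈ X, ⨆ y ∈ X, ⨆ z ∈ X, kappa x y z) = ⊤ ∧
    ∀ p : ℝ, 1 ≤ p → energyU p 1 X = ⊤ :=
  ⟨iSup_kappaG_eq_top_of_alternatingSegments_subset hij hpos hhalf hX,
    fun _ hp ↦ energyU_one_eq_top_of_alternatingSegments_subset hij hpos hhalf hX hp⟩

lemma aseq_pos (n : ℕ) : 0 < aseq n := by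
  unfold aseq
  positivity

lemma strictMono_self_pow_mul_cube : StrictMono fun n : ℕ ↦ n ^ n * n ^ 3 := by
  refine strictMono_nat_of_lt_succ fun n ↦ Nat.mul_lt_mul_of_le_of_lt ?_ ?_ (by positivity)
  · exact (Nat.pow_le_pow_left n.le_succ n).trans (Nat.pow_le_pow_right n.succ_pos n.le_succ)
  · exact Nat.pow_lt_pow_left n.lt_succ_self three_ne_zero

lemma aseq_succ_le_half (n : ℕ) : aseq (n + 1) ≤ aseq n / 2 := by
  unfold aseq
  rw [div_eq_mul_inv, ← mul_inv, ← pow_succ]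
  exact inv_anti₀ (by positivity)
    (pow_le_pow_right₀ one_le_two (strictMono_self_pow_mul_cube n.lt_succ_self))

lemma alternatingSegments_aseq_subset_Fset :
    alternatingSegments 0 1 (fun n ↦ aseq (n + 2)) ⊆ Fset := by
  refine union_subset_union (iUnion_subset fun n ↦ ?_) (iUnion_subset fun n ↦ ?_)
  · rintro _ ⟨s, hs, rfl⟩
    exact ⟨n + 1, by lia, by simp, by simpa [mul_add] using hs⟩
  · rintro _ ⟨s, hs, rfl⟩
    exact ⟨n + 2, by lia, by simp, by simpa [mul_add] using hs⟩

theorem Fset_zero_thickness_and_energyU_infinite :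
    (⨆ x ∈ Fset, ⨆ y ∈ Fset, ⨆ z ∈ Fset, kappa x y z) = ⊤ ∧
    ∀ p : ℝ, 1 ≤ p → energyU p 1 Fset = ⊤ :=
  Fset_zero_thickness_and_energyU_infinite_general zero_ne_one (fun _ ↦ aseq_pos _)
    (fun _ ↦ aseq_succ_le_half _) alternatingSegments_aseq_subset_Fset

end
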